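/- Let C₂₁ be the shortening of the extended binary Golay code C₂₄ at positions {22,23,24}, i.e. C₂₁ = {w|_{1..21} : w ∈ C₂₄, w(22)=w(23)=w(24)}. Then C₂₁ is a [21,10] binary linear code with weight distribution 0¹ 5²¹ 8²¹⁰ 9²⁸⁰ 12²⁸⁰ 13²¹⁰ 16²¹ 21¹. -/

import Mathlib

open scoped BigOperators

/-- A generator matrix of the extended binary Golay code (MOG coordinates). -/
def golayMatrix : Matrix (Fin 12) (Fin 24) (ZMod 2) :=
  !![0, 0, 0, 0, 0, 0, 0, 0, 0, 0, 0, 0, 0, 0, 0, 0, 1, 1, 1, 1, 1, 1, 1, 1;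
    0, 0, 0, 0, 0, 0, 0, 0, 0, 0, 0, 0, 1, 1, 1, 1, 0, 0, 0, 0, 1, 1, 1, 1;
    0, 0, 0, 0, 0, 0, 0, 0, 0, 0, 1, 1, 0, 0, 1, 1, 0, 0, 1, 1, 0, 0, 1, 1;
    0, 0, 0, 0, 0, 0, 0, 0, 0, 1, 0, 1, 0, 1, 0, 1, 0, 1, 0, 1, 0, 1, 0, 1;
    0, 0, 0, 0, 0, 0, 0, 0, 1, 0, 0, 1, 0, 1, 1, 0, 0, 1, 1, 0, 1, 0, 0, 1;
    0, 0, 0, 0, 0, 0, 1, 1, 0, 0, 0, 0, 0, 0, 1, 1, 0, 1, 1, 0, 0, 1, 0, 1;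
    0, 0, 0, 0, 0, 1, 0, 1, 0, 0, 0, 0, 0, 1, 0, 1, 0, 0, 1, 1, 0, 1, 1, 0;
    0, 0, 0, 0, 1, 0, 0, 1, 0, 0, 0, 0, 0, 1, 1, 0, 0, 1, 0, 1, 1, 1, 0, 0;
    0, 0, 0, 1, 0, 0, 0, 1, 0, 0, 0, 1, 0, 0, 0, 1, 0, 1, 1, 1, 1, 0, 0, 0;
    0, 0, 1, 0, 0, 0, 0, 1, 0, 0, 0, 1, 0, 0, 1, 0, 0, 0, 1, 0, 1, 1, 1, 0;
    0, 1, 0, 0, 0, 0, 0, 1, 0, 0, 0, 1, 0, 1, 0, 0, 0, 0, 0, 1, 1, 0, 1, 1;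
    1, 0, 0, 0, 0, 0, 0, 1, 0, 0, 0, 1, 0, 1, 1, 1, 0, 1, 0, 0, 0, 0, 1, 0]

/-- The extended binary Golay code `C₂₄`. -/
def GolayCode : Submodule (ZMod 2) (Fin 24 → ZMod 2) :=
  Submodule.span (ZMod 2) (Set.range fun i => golayMatrix i)

/-- Membership in the Leech lattice `Λ₂₄ ⊂ ℤ²⁴` (coordinates scaled by `√8`),
via the standard congruence characterization. -/
def IsLeech (x : Fin 24 → ℤ) : Prop :=
  ∃ m : ℤ, (m = 0 ∨ m = 1) ∧ (∀ i, (2:ℤ) ∣ (x i - m)) ∧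
    ((fun i => if (4:ℤ) ∣ (x i - m - 2) then (1 : ZMod 2) else 0) ∈ GolayCode) ∧
    (8:ℤ) ∣ ((∑ i, x i) - 4 * m)

/-- The inner product `⟨x, y⟩ = (Σ xᵢ yᵢ)/8` on the Leech lattice. -/
def leechInner (x y : Fin 24 → ℤ) : ℚ := (∑ i, (x i : ℚ) * (y i : ℚ)) / 8

/-- The lattice point `A = (0²¹, 4, 0, −4)`. -/
def vA : Fin 24 → ℤ := fun i => if i.val = 21 then 4 else if i.val = 23 then -4 else 0

/-- The lattice point `B = (0²¹, 0, 4, −4)`. -/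
def vB : Fin 24 → ℤ := fun i => if i.val = 22 then 4 else if i.val = 23 then -4 else 0

/-- `T_AB`: lattice points `T` with `|OT| = |AT| = |BT| = 2`. -/
def TAB : Set (Fin 24 → ℤ) :=
  {T | IsLeech T ∧ leechInner T T = 4 ∧
       leechInner (T - vA) (T - vA) = 4 ∧ leechInner (T - vB) (T - vB) = 4}

/-- Codewords of `C₂₄` taking equal values at positions 22, 23, 24. -/
def GolayEq : Submodule (ZMod 2) (Fin 24 → ZMod 2) :=
  GolayCode
    ⊓ LinearMap.ker
        ((LinearMap.proj ⟨21, by omega⟩ : (Fin 24 → ZMod 2) →ₗ[ZMod 2] ZMod 2)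
          - LinearMap.proj ⟨23, by omega⟩)
    ⊓ LinearMap.ker
        ((LinearMap.proj ⟨22, by omega⟩ : (Fin 24 → ZMod 2) →ₗ[ZMod 2] ZMod 2)
          - LinearMap.proj ⟨23, by omega⟩)

/-- The shortened code `C₂₁`: restrictions to the first 21 coordinates. -/
def C21 : Submodule (ZMod 2) (Fin 21 → ZMod 2) :=
  Submodule.map
    (LinearMap.funLeft (ZMod 2) (ZMod 2) (Fin.castLE (by omega))) GolayEq

/-- The weight of a binary word of length 21. -/
noncomputable def wt21 (w : Fin 21 → ZMod 2) : ℕ := Nat.card {i : Fin 21 // w i ≠ 0}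

/-!
The Golay code is doubly even and self-orthogonal of dimension half its length, as one checks on
the rows of the generator matrix `[I | A]`, hence self-dual. It contains the all-ones word, and a
word of weight 4 would be a sum of at most two rows of either `[I | A]` or `[Aᵀ | I]`, so the
weights are `0, 8, 12, 16, 24`. By self-duality the minimum distance 8 means that the code takes
arbitrary values on any seven positions. Hence asking for equal values at the last three positions
costs two dimensions, restricting to the first 21 positions costs none, and the even-weight
subcode of `C₂₁` has nonzero and pairwise distinct coordinate functions. The power moments of
order `0, 1, 2` of this subcode, whose weights are `0, 8, 12, 16`, then determine its weight
distribution, and adding the all-ones word gives the odd weights.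
-/

open Module Finset Matrix

namespace LinearCode

section Semiring

variable {R ι κ : Type*}

theorem dotProduct_eq_zero_of_mem_span [CommSemiring R] [Fintype ι] {s : Set (ι → R)}
    (hs : ∀ u ∈ s, ∀ v ∈ s, u ⬝ᵥ v = 0) {u v : ι → R} (hu : u ∈ Submodule.span R s)
    (hv : v ∈ Submodule.span R s) : u ⬝ᵥ v = 0 := by
  induction hu, hv using Submodule.span_induction₂ with
  | mem_mem u v hu hv => exact hs u hu v hv
  | zero_left v _ => exact zero_dotProduct v
  | zero_right u _ => exact dotProduct_zero u
  | add_left u₁ u₂ v _ _ _ h₁ h₂ => rw [add_dotProduct, h₁, h₂, add_zero]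
  | add_right u v₁ v₂ _ _ _ h₁ h₂ => rw [dotProduct_add, h₁, h₂, add_zero]
  | smul_left a u v _ _ h => rw [smul_dotProduct, h, smul_zero]
  | smul_right a u v _ _ h => rw [dotProduct_smul, h, smul_zero]

variable [Semiring R] [Fintype κ] [DecidableEq κ] {G : Matrix κ ι R}

theorem vecMul_comp_of_submatrix_eq_one {e : κ → ι} (he : G.submatrix id e = 1) (c : κ → R) :
    (c ᵥ* G) ∘ e = c :=
  calc (c ᵥ* G) ∘ e = c ᵥ* G.submatrix id e := rfl
    _ = c := by rw [he, vecMul_one]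

theorem vecMul_comp_vecMul_of_submatrix_mul_eq_one {f : κ → ι} {B : Matrix κ κ R}
    (hB : G.submatrix id f * B = 1) (c : κ → R) : ((c ᵥ* G) ∘ f) ᵥ* (B * G) = c ᵥ* G :=
  calc ((c ᵥ* G) ∘ f) ᵥ* (B * G) = (c ᵥ* G.submatrix id f) ᵥ* (B * G) := rfl
    _ = c ᵥ* G := by rw [vecMul_vecMul, ← Matrix.mul_assoc, hB, Matrix.one_mul]

theorem finrank_span_row_of_submatrix_eq_one [StrongRankCondition R] {e : κ → ι}
    (he : G.submatrix id e = 1) :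
    finrank R (Submodule.span R (Set.range G.row)) = Fintype.card κ := by
  have := nontrivial_of_invariantBasisNumber R
  exact finrank_span_eq_card <| vecMul_injective_iff.1 <|
    Function.LeftInverse.injective (g := (· ∘ e)) (vecMul_comp_of_submatrix_eq_one he)

end Semiring

section Field

variable {K : Type*} [Field K]

theorem finrank_map_add_finrank_inf_ker {V W : Type*} [AddCommGroup V] [Module K V]
    [AddCommGroup W] [Module K W] (C : Submodule K V) [FiniteDimensional K C] (f : V →ₗ[K] W) :
    finrank K (C.map f) + finrank K ↥(C ⊓ LinearMap.ker f) = finrank K C := by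
  have hker : finrank K (LinearMap.ker (f.domRestrict C)) = finrank K ↥(C ⊓ LinearMap.ker f) := by
    rw [LinearMap.ker_domRestrict, ← Submodule.map_comap_subtype]
    exact (Submodule.finrank_map_subtype_eq C _).symm
  rw [← LinearMap.range_domRestrict, ← hker, LinearMap.finrank_range_add_finrank_ker]

variable {ι : Type*} [Fintype ι] {C : Submodule K (ι → K)}

theorem mem_of_forall_dotProduct_eq_zero (horth : ∀ u ∈ C, ∀ v ∈ C, u ⬝ᵥ v = 0)
    (hdim : 2 * finrank K C = Fintype.card ι) {v : ι → K} (hv : ∀ u ∈ C, u ⬝ᵥ v = 0) :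
    v ∈ C := by
  classical
  set D : Submodule K (ι → K) := (C.map (dotProductEquiv K ι).toLinearMap).dualCoannihilator
  have mem_D (w : ι → K) : w ∈ D ↔ ∀ u ∈ C, u ⬝ᵥ w = 0 := by
    rw [Submodule.mem_dualCoannihilator]
    exact Set.forall_mem_image
  have hCD : C ≤ D := fun w hw => (mem_D w).2 fun u hu => horth u hu w hw
  have hfinrank : finrank K C + finrank K D = Fintype.card ι := by
    have h := Subspace.finrank_add_finrank_dualCoannihilator_eq
      (C.map (dotProductEquiv K ι).toLinearMap)
    rwa [LinearEquiv.finrank_map_eq, finrank_fintype_fun_eq_card] at h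
  rw [Submodule.eq_of_le_of_finrank_eq hCD (by omega)]
  exact (mem_D v).2 hv

-- If the restrictions of `C` to `T` were not everything, a functional killing them would be a
-- nonzero word of the dual code `C` supported on `T`.
theorem exists_mem_eqOn_of_card_lt_hammingNorm [DecidableEq K]
    (horth : ∀ u ∈ C, ∀ v ∈ C, u ⬝ᵥ v = 0) (hdim : 2 * finrank K C = Fintype.card ι) {T : Finset ι}
    (hT : ∀ v ∈ C, v ≠ 0 → #T < hammingNorm v) (y : ι → K) :
    ∃ v ∈ C, ∀ i ∈ T, v i = y i := by
  classical
  set restrict : (ι → K) →ₗ[K] (T → K) := LinearMap.funLeft K K Subtype.val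
  suffices hmap : C.map restrict = ⊤ by
    obtain ⟨v, hvC, hv⟩ := hmap ▸ Submodule.mem_top (x := restrict y)
    exact ⟨v, hvC, fun i hi => congrFun hv ⟨i, hi⟩⟩
  by_contra hne
  obtain ⟨f, hf, hle⟩ := Submodule.exists_le_ker_of_lt_top _ (lt_top_iff_ne_top.2 hne)
  set z : ι → K := (dotProductEquiv K ι).symm (f ∘ₗ restrict)
  have dotProduct_z (v : ι → K) : z ⬝ᵥ v = f (restrict v) :=
    LinearMap.congr_fun ((dotProductEquiv K ι).apply_symm_apply (f ∘ₗ restrict)) v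
  have hzC : z ∈ C := mem_of_forall_dotProduct_eq_zero horth hdim fun u hu => by
    rw [dotProduct_comm, dotProduct_z]
    exact hle (Submodule.mem_map_of_mem hu)
  have hz_supp : hammingNorm z ≤ #T := by
    refine card_le_card fun i hi => by_contra fun hiT => (mem_filter.1 hi).2 ?_
    have hrestrict : restrict (Pi.single i 1) = 0 :=
      funext fun j => Pi.single_eq_of_ne (ne_of_mem_of_not_mem j.2 hiT) 1
    rw [← dotProduct_single_one z i, dotProduct_z, hrestrict, map_zero]
  have hz : z = 0 := by_contra fun h => (hT z hzC h).not_ge hz_supp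
  refine hf (LinearMap.ext fun t => ?_)
  obtain ⟨v, rfl⟩ := LinearMap.funLeft_surjective_of_injective K K _ Subtype.val_injective t
  rw [LinearMap.zero_apply, ← zero_dotProduct v, ← hz, dotProduct_z]

end Field

section HammingNorm

variable {α ι κ : Type*} [Fintype α] [Fintype ι] [Fintype κ]

theorem hammingNorm_comp_add_hammingNorm_comp {K : Type*} [Zero K] [DecidableEq K] {e : κ → ι}
    {f : α → ι} (hef : Function.Bijective (Sum.elim e f)) (v : ι → K) :
    hammingNorm (v ∘ e) + hammingNorm (v ∘ f) = hammingNorm v := by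
  simp only [hammingNorm, card_filter]
  rw [← hef.sum_comp, Fintype.sum_sum_type]
  rfl

theorem ne_zero_iff_eq_one {a : ZMod 2} : a ≠ 0 ↔ a = 1 := by
  revert a; decide

theorem dotProduct_eq_card (v w : ι → ZMod 2) : v ⬝ᵥ w = #{i | v i ≠ 0 ∧ w i ≠ 0} := by
  have hmul : ∀ a b : ZMod 2, a * b = if a ≠ 0 ∧ b ≠ 0 then 1 else 0 := by decide
  simp only [dotProduct, hmul, sum_boole]

theorem sum_eq_hammingNorm (v : ι → ZMod 2) : ∑ i, v i = hammingNorm v := by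
  simpa [dotProduct, hammingNorm] using dotProduct_eq_card v 1

theorem card_add_ne_zero (f g : α → ZMod 2) :
    #{a | f a + g a ≠ 0} + 2 * #{a | f a ≠ 0 ∧ g a ≠ 0} = #{a | f a ≠ 0} + #{a | g a ≠ 0} := by
  have hadd : ∀ a b : ZMod 2, (if a + b ≠ 0 then 1 else 0) + 2 * (if a ≠ 0 ∧ b ≠ 0 then 1 else 0)
      = (if a ≠ 0 then 1 else 0) + if b ≠ 0 then 1 else 0 := by decide
  simp only [card_filter, mul_sum, ← sum_add_distrib, hadd]

theorem hammingNorm_one_add (v : ι → ZMod 2) :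
    hammingNorm (1 + v) + hammingNorm v = Fintype.card ι := by
  have hadd : ∀ a : ZMod 2, 1 + a ≠ 0 ↔ ¬a ≠ 0 := by decide
  simp only [hammingNorm, Pi.add_apply, Pi.one_apply, hadd]
  rw [add_comm, card_filter_add_card_filter_not, card_univ]

theorem four_dvd_hammingNorm_of_mem_span {s : Set (ι → ZMod 2)} (hs : ∀ v ∈ s, 4 ∣ hammingNorm v)
    (horth : ∀ u ∈ s, ∀ v ∈ s, u ⬝ᵥ v = 0) {v : ι → ZMod 2}
    (hv : v ∈ Submodule.span (ZMod 2) s) : 4 ∣ hammingNorm v := by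
  induction hv using Submodule.span_induction with
  | mem v hv => exact hs v hv
  | zero => exact hammingNorm_zero (β := fun _ : ι => ZMod 2) ▸ dvd_zero 4
  | add u v hu hv hu4 hv4 =>
    have hoverlap : 2 ∣ #{i | u i ≠ 0 ∧ v i ≠ 0} := by
      rw [← ZMod.natCast_eq_zero_iff, ← dotProduct_eq_card]
      exact dotProduct_eq_zero_of_mem_span horth hu hv
    have hadd : hammingNorm (u + v) + 2 * #{i | u i ≠ 0 ∧ v i ≠ 0}
        = hammingNorm u + hammingNorm v := card_add_ne_zero u v
    omega
  | smul a v _ hv4 =>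
    by_cases ha : a = 0
    · rw [ha, zero_smul, hammingNorm_zero]
      exact dvd_zero 4
    · rwa [ne_zero_iff_eq_one.1 ha, one_smul]

theorem vecMul_eq_sum_row {β : Type*} (c : κ → ZMod 2) (G : Matrix κ β (ZMod 2)) :
    c ᵥ* G = ∑ k with c k ≠ 0, G.row k := by
  rw [sum_filter]
  refine (vecMul_eq_sum c G).trans (sum_congr rfl fun k _ => ?_)
  split_ifs with hk
  · exact ne_zero_iff_eq_one.1 hk ▸ one_smul _ (G.row k)
  · exact not_not.1 hk ▸ zero_smul _ (G.row k)

theorem hammingNorm_vecMul_ne_four {G : Matrix κ ι (ZMod 2)}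
    (hrow : ∀ k, hammingNorm (G.row k) ≠ 4) (hpair : ∀ k l, hammingNorm (G.row k + G.row l) ≠ 4)
    {c : κ → ZMod 2} (hc : hammingNorm c ≤ 2) : hammingNorm (c ᵥ* G) ≠ 4 := by
  classical
  rw [vecMul_eq_sum_row]
  rw [hammingNorm] at hc
  interval_cases hcard : #{k | c k ≠ 0}
  · rw [card_eq_zero.1 hcard, sum_empty, hammingNorm_zero]
    norm_num
  · obtain ⟨k, hk⟩ := card_eq_one.1 hcard
    rw [hk, sum_singleton]
    exact hrow k
  · obtain ⟨k, l, hkl, hs⟩ := card_eq_two.1 hcard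
    rw [hs, sum_pair hkl]
    exact hpair k l

end HammingNorm

section WeightDistribution

theorem two_mul_card_ne_zero {V : Type*} [AddCommGroup V] [Module (ZMod 2) V] [Fintype V]
    {f : V →ₗ[ZMod 2] ZMod 2} (hf : f ≠ 0) : 2 * #{v | f v ≠ 0} = Fintype.card V := by
  obtain ⟨v, hv⟩ := DFunLike.ne_iff.1 hf
  have hfiber : #{v | f v = 0} = #{v | f v ≠ 0} := by
    simp only [ne_zero_iff_eq_one]
    exact AddMonoidHom.card_fiber_eq_of_mem_range f ⟨0, map_zero f⟩ ⟨v, ne_zero_iff_eq_one.1 hv⟩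
  rw [two_mul]
  nth_rw 1 [← hfiber]
  rw [card_filter_add_card_filter_not, card_univ]

theorem four_mul_card_ne_zero_and_ne_zero {V : Type*} [AddCommGroup V] [Module (ZMod 2) V]
    [Fintype V] {f g : V →ₗ[ZMod 2] ZMod 2} (hf : f ≠ 0) (hg : g ≠ 0) (hfg : f ≠ g) :
    4 * #{v | f v ≠ 0 ∧ g v ≠ 0} = Fintype.card V := by
  have hadd : f + g ≠ 0 := fun h => hfg <| by
    rw [eq_neg_of_add_eq_zero_left h, ZModModule.neg_eq_self]
  have hcard := card_add_ne_zero f g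
  have hcard_f := two_mul_card_ne_zero hf
  have hcard_g := two_mul_card_ne_zero hg
  have hcard_add := two_mul_card_ne_zero hadd
  simp only [LinearMap.add_apply] at hcard_add
  omega

variable {ι : Type*} {C : Submodule (ZMod 2) (ι → ZMod 2)}

theorem two_mul_card_apply_ne_zero [Fintype C] {i : ι} (hne : ∃ w ∈ C, w i ≠ 0) :
    2 * #{w : C | (w : ι → ZMod 2) i ≠ 0} = Fintype.card C := by
  obtain ⟨w, hw, hwi⟩ := hne
  exact two_mul_card_ne_zero (f := (LinearMap.proj i).domRestrict C)
    fun h => hwi (LinearMap.congr_fun h ⟨w, hw⟩)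

theorem four_mul_card_apply_ne_zero_and_apply_ne_zero [Fintype C] {i j : ι}
    (hi : ∃ w ∈ C, w i ≠ 0) (hj : ∃ w ∈ C, w j ≠ 0) (hij : ∃ w ∈ C, w i ≠ w j) :
    4 * #{w : C | (w : ι → ZMod 2) i ≠ 0 ∧ (w : ι → ZMod 2) j ≠ 0} = Fintype.card C := by
  obtain ⟨u, hu, hui⟩ := hi
  obtain ⟨v, hv, hvj⟩ := hj
  obtain ⟨w, hw, hwij⟩ := hij
  exact four_mul_card_ne_zero_and_ne_zero (f := (LinearMap.proj i).domRestrict C)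
    (g := (LinearMap.proj j).domRestrict C) (fun h => hui (LinearMap.congr_fun h ⟨u, hu⟩))
    (fun h => hvj (LinearMap.congr_fun h ⟨v, hv⟩)) fun h => hwij (LinearMap.congr_fun h ⟨w, hw⟩)

variable [Fintype ι]

/-- The number `A_k` of words of weight `k` in the binary linear code `C`. -/
noncomputable def weightCount (C : Submodule (ZMod 2) (ι → ZMod 2)) (k : ℕ) : ℕ :=
  Nat.card {w : C // hammingNorm (w : ι → ZMod 2) = k}

/-- The subcode of words of even weight, cut out by the parity check `∑ i, w i = 0`. -/
def evenSubcode (C : Submodule (ZMod 2) (ι → ZMod 2)) : Submodule (ZMod 2) (ι → ZMod 2) :=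
  C ⊓ LinearMap.ker (∑ i, LinearMap.proj i)

theorem mem_evenSubcode {w : ι → ZMod 2} : w ∈ evenSubcode C ↔ w ∈ C ∧ Even (hammingNorm w) := by
  rw [← ZMod.natCast_eq_zero_iff_even, ← sum_eq_hammingNorm]
  simp [evenSubcode]

theorem weightCount_zero : weightCount C 0 = 1 := by
  have : Unique {w : C // hammingNorm (w : ι → ZMod 2) = 0} :=
    { default := ⟨0, hammingNorm_zero⟩
      uniq := fun w => Subtype.ext (Subtype.ext (hammingNorm_eq_zero.1 w.2)) }
  exact Nat.card_unique

theorem weightCount_evenSubcode {k : ℕ} (hk : Even k) :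
    weightCount (evenSubcode C) k = weightCount C k :=
  Nat.card_congr
    { toFun := fun w => ⟨⟨w, (mem_evenSubcode.1 w.1.2).1⟩, w.2⟩
      invFun := fun w => ⟨⟨w, mem_evenSubcode.2 ⟨w.1.2, w.2.symm ▸ hk⟩⟩, w.2⟩ }

theorem weightCount_eq_of_add_eq_card (hone : 1 ∈ C) {k l : ℕ} (hkl : k + l = Fintype.card ι) :
    weightCount C k = weightCount C l :=
  Nat.card_congr <| (Equiv.addLeft (⟨1, hone⟩ : C)).subtypeEquiv fun w => by
    have hw := hammingNorm_one_add (w : ι → ZMod 2)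
    simp only [Equiv.coe_addLeft, Submodule.coe_add]
    omega

theorem finrank_evenSubcode_add_one (hodd : ∃ w ∈ C, Odd (hammingNorm w)) :
    finrank (ZMod 2) (evenSubcode C) + 1 = finrank (ZMod 2) C := by
  set parity : (ι → ZMod 2) →ₗ[ZMod 2] ZMod 2 := ∑ i, LinearMap.proj i
  obtain ⟨w, hwC, hw⟩ := hodd
  have hparity : parity w ≠ 0 := by
    rwa [LinearMap.sum_apply, sum_congr rfl fun i _ => LinearMap.proj_apply i w,
      sum_eq_hammingNorm, ZMod.natCast_ne_zero_iff_odd]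
  have hmap : C.map parity = ⊤ := (eq_bot_or_eq_top _).resolve_left <|
    (Submodule.ne_bot_iff _).2 ⟨parity w, Submodule.mem_map_of_mem hwC, hparity⟩
  rw [← finrank_map_add_finrank_inf_ker C parity, hmap, finrank_top, finrank_self, add_comm]
  rfl

variable [Fintype C]

theorem sum_comp_hammingNorm {W : Finset ℕ} (hW : ∀ w ∈ C, hammingNorm w ∈ W) (g : ℕ → ℕ) :
    ∑ w : C, g (hammingNorm (w : ι → ZMod 2)) = ∑ k ∈ W, weightCount C k * g k := by
  rw [← sum_fiberwise_of_maps_to (t := W) (fun w _ => hW _ w.2)]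
  refine sum_congr rfl fun k _ => ?_
  rw [weightCount, Nat.card_eq_fintype_card, Fintype.card_subtype, ← smul_eq_mul, ← sum_const]
  exact sum_congr rfl fun w hw => by rw [(mem_filter.1 hw).2]

theorem two_mul_sum_hammingNorm (hne : ∀ i, ∃ w ∈ C, w i ≠ 0) :
    2 * ∑ w : C, hammingNorm (w : ι → ZMod 2) = Fintype.card ι * Fintype.card C := by
  simp only [hammingNorm, card_filter]
  rw [sum_comm, mul_sum]
  simp only [← card_filter, two_mul_card_apply_ne_zero (hne _), sum_const, card_univ, smul_eq_mul]

theorem four_mul_sum_hammingNorm_sq (hne : ∀ i, ∃ w ∈ C, w i ≠ 0)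
    (hsep : ∀ i j, i ≠ j → ∃ w ∈ C, w i ≠ w j) :
    4 * ∑ w : C, hammingNorm (w : ι → ZMod 2) ^ 2
      = Fintype.card ι * (Fintype.card ι + 1) * Fintype.card C := by
  classical
  set N := Fintype.card C
  have hpair (i j : ι) : 4 * #{w : C | (w : ι → ZMod 2) i ≠ 0 ∧ (w : ι → ZMod 2) j ≠ 0}
      = N + if i = j then N else 0 := by
    split_ifs with hij
    · subst hij
      simp only [and_self]
      linarith [two_mul_card_apply_ne_zero (hne i)]
    · rw [four_mul_card_apply_ne_zero_and_apply_ne_zero (hne i) (hne j) (hsep i j hij), add_zero]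
  have hsq (w : ι → ZMod 2) :
      hammingNorm w ^ 2 = ∑ i, ∑ j, if w i ≠ 0 ∧ w j ≠ 0 then 1 else 0 := by
    simp only [hammingNorm, card_filter, sq, sum_mul_sum, ite_zero_mul_ite_zero, mul_one]
  calc 4 * ∑ w : C, hammingNorm (w : ι → ZMod 2) ^ 2
      = ∑ i, ∑ j, 4 * #{w : C | (w : ι → ZMod 2) i ≠ 0 ∧ (w : ι → ZMod 2) j ≠ 0} := by
        simp only [hsq, card_filter, mul_sum]
        rw [sum_comm]
        exact sum_congr rfl fun i _ => sum_comm
    _ = Fintype.card ι * (Fintype.card ι + 1) * N := by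
        simp only [hpair, sum_add_distrib, sum_ite_eq, mem_univ, if_true, sum_const, card_univ,
          smul_eq_mul]
        ring

end WeightDistribution

end LinearCode

open LinearCode

section Golay

/-- An information set for `golayMatrix`, whose columns there form the identity matrix. -/
def golayInfo : Fin 12 → Fin 24 := ![16, 12, 10, 9, 8, 6, 5, 4, 3, 2, 1, 0]

/-- The check positions of `golayMatrix`, complementary to `golayInfo`. By self-duality they form
an information set too. -/
def golayCheck : Fin 12 → Fin 24 := ![7, 11, 13, 14, 15, 17, 18, 19, 20, 21, 22, 23]

/-- The second systematic generator matrix `[Aᵀ | I]` of the Golay code, where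
`golayMatrix = [I | A]` with respect to `golayInfo` and `golayCheck`. -/
def golayCheckMatrix : Matrix (Fin 12) (Fin 24) (ZMod 2) :=
  (golayMatrix.submatrix id golayCheck)ᵀ * golayMatrix

theorem golayMatrix_submatrix_golayInfo : golayMatrix.submatrix id golayInfo = 1 := by
  decide +kernel

theorem golayMatrix_submatrix_golayCheck_mul_transpose :
    golayMatrix.submatrix id golayCheck * (golayMatrix.submatrix id golayCheck)ᵀ = 1 := by
  decide +kernel

theorem sumElim_golayInfo_golayCheck_bijective :
    Function.Bijective (Sum.elim golayInfo golayCheck) := by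
  decide +kernel

theorem golayMatrix_row_dotProduct_row (i j : Fin 12) :
    golayMatrix.row i ⬝ᵥ golayMatrix.row j = 0 := by
  decide +kernel +revert

theorem four_dvd_hammingNorm_golayMatrix_row (i : Fin 12) :
    4 ∣ hammingNorm (golayMatrix.row i) := by
  decide +kernel +revert

theorem finrank_golayCode : finrank (ZMod 2) GolayCode = 12 :=
  finrank_span_row_of_submatrix_eq_one golayMatrix_submatrix_golayInfo

theorem two_mul_finrank_golayCode :
    2 * finrank (ZMod 2) GolayCode = Fintype.card (Fin 24) := by
  rw [finrank_golayCode, Fintype.card_fin]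

theorem golayCode_dotProduct_eq_zero :
    ∀ u ∈ GolayCode, ∀ v ∈ GolayCode, u ⬝ᵥ v = 0 := fun _ hu _ hv =>
  dotProduct_eq_zero_of_mem_span
    (Set.forall_mem_range.2 fun i => Set.forall_mem_range.2 (golayMatrix_row_dotProduct_row i))
    hu hv

theorem four_dvd_hammingNorm_of_mem_golayCode {v : Fin 24 → ZMod 2} (hv : v ∈ GolayCode) :
    4 ∣ hammingNorm v :=
  four_dvd_hammingNorm_of_mem_span (Set.forall_mem_range.2 four_dvd_hammingNorm_golayMatrix_row)
    (Set.forall_mem_range.2 fun i => Set.forall_mem_range.2 (golayMatrix_row_dotProduct_row i)) hv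

theorem one_mem_golayCode : 1 ∈ GolayCode :=
  mem_of_forall_dotProduct_eq_zero golayCode_dotProduct_eq_zero two_mul_finrank_golayCode
    fun u hu => by
      rw [dotProduct_one, sum_eq_hammingNorm, ZMod.natCast_eq_zero_iff]
      exact (by norm_num : 2 ∣ 4).trans (four_dvd_hammingNorm_of_mem_golayCode hu)

-- A word of weight 4 has at most two nonzero entries on one of the two information sets, hence is
-- a sum of at most two rows of the corresponding generator matrix.
theorem hammingNorm_ne_four_of_mem_golayCode {v : Fin 24 → ZMod 2} (hv : v ∈ GolayCode) :
    hammingNorm v ≠ 4 := by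
  intro hv4
  obtain ⟨c, rfl⟩ : v ∈ LinearMap.range golayMatrix.vecMulLinear :=
    (range_vecMulLinear golayMatrix).symm ▸ hv
  rw [vecMulLinear_apply] at hv4
  have hsplit := hammingNorm_comp_add_hammingNorm_comp sumElim_golayInfo_golayCheck_bijective
    (c ᵥ* golayMatrix)
  rw [vecMul_comp_of_submatrix_eq_one golayMatrix_submatrix_golayInfo] at hsplit
  obtain hinfo | hcheck :
      hammingNorm c ≤ 2 ∨ hammingNorm ((c ᵥ* golayMatrix) ∘ golayCheck) ≤ 2 := by
    omega
  · exact hammingNorm_vecMul_ne_four (by decide +kernel) (by decide +kernel) hinfo hv4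
  · rw [← vecMul_comp_vecMul_of_submatrix_mul_eq_one
      golayMatrix_submatrix_golayCheck_mul_transpose] at hv4
    exact hammingNorm_vecMul_ne_four (G := golayCheckMatrix) (by decide +kernel)
      (by decide +kernel) hcheck hv4

theorem hammingNorm_mem_of_mem_golayCode {v : Fin 24 → ZMod 2} (hv : v ∈ GolayCode) :
    hammingNorm v ∈ ({0, 8, 12, 16, 24} : Finset ℕ) := by
  have hdvd := four_dvd_hammingNorm_of_mem_golayCode hv
  have hne_four := hammingNorm_ne_four_of_mem_golayCode hv
  have hcompl_ne_four := hammingNorm_ne_four_of_mem_golayCode (add_mem one_mem_golayCode hv)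
  have hcompl := hammingNorm_one_add v
  rw [Fintype.card_fin] at hcompl
  simp only [mem_insert, mem_singleton]
  omega

theorem eight_le_hammingNorm_of_mem_golayCode {v : Fin 24 → ZMod 2} (hv : v ∈ GolayCode)
    (hv0 : v ≠ 0) : 8 ≤ hammingNorm v := by
  have hpos := hammingNorm_pos_iff.2 hv0
  have hmem := hammingNorm_mem_of_mem_golayCode hv
  simp only [mem_insert, mem_singleton] at hmem
  omega

theorem exists_mem_golayCode_eqOn {T : Finset (Fin 24)} (hT : #T < 8) (y : Fin 24 → ZMod 2) :
    ∃ v ∈ GolayCode, ∀ i ∈ T, v i = y i :=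
  exists_mem_eqOn_of_card_lt_hammingNorm golayCode_dotProduct_eq_zero two_mul_finrank_golayCode
    (fun _ hv hv0 => hT.trans_le (eight_le_hammingNorm_of_mem_golayCode hv hv0)) y

end Golay

section ShortenedGolay

theorem wt21_eq_hammingNorm (w : Fin 21 → ZMod 2) : wt21 w = hammingNorm w := by
  rw [wt21, Nat.card_eq_fintype_card, Fintype.card_subtype, hammingNorm]

theorem mem_golayEq {v : Fin 24 → ZMod 2} :
    v ∈ GolayEq ↔ v ∈ GolayCode ∧ v 21 = v 23 ∧ v 22 = v 23 := by
  simp only [GolayEq, Submodule.mem_inf, LinearMap.mem_ker, LinearMap.sub_apply,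
    LinearMap.proj_apply, sub_eq_zero, and_assoc]
  rfl

theorem mem_C21 {w : Fin 21 → ZMod 2} :
    w ∈ C21 ↔ ∃ v ∈ GolayEq, v ∘ Fin.castLE (by omega) = w :=
  Iff.rfl

theorem hammingNorm_eq_add_ite_of_mem_golayEq {v : Fin 24 → ZMod 2} (hv : v ∈ GolayEq) :
    hammingNorm v
      = hammingNorm (v ∘ Fin.castLE (by omega : 21 ≤ 24)) + if v 23 = 0 then 0 else 3 := by
  have hbij : Function.Bijective
      (Sum.elim (Fin.castLE (by omega : 21 ≤ 24)) (Fin.natAdd 21 : Fin 3 → Fin 24)) :=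
    finSumFinEquiv.bijective
  have htail : v ∘ (Fin.natAdd 21 : Fin 3 → Fin 24) = fun _ => v 23 := by
    obtain ⟨-, h21, h22⟩ := mem_golayEq.1 hv
    funext i
    fin_cases i
    exacts [h21, h22, rfl]
  rw [← hammingNorm_comp_add_hammingNorm_comp hbij v, htail]
  congr 1
  split_ifs with h <;> simp [hammingNorm, h]

theorem finrank_golayEq : finrank (ZMod 2) GolayEq = 10 := by
  let coord : Fin 24 → (Fin 24 → ZMod 2) →ₗ[ZMod 2] ZMod 2 := LinearMap.proj
  let defect := (coord 21 - coord 23).prod (coord 22 - coord 23)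
  have heq : GolayEq = GolayCode ⊓ LinearMap.ker defect := by
    rw [LinearMap.ker_prod, ← inf_assoc]
    rfl
  have hmap : GolayCode.map defect = ⊤ := by
    refine eq_top_iff.2 fun ⟨a, b⟩ _ => ?_
    obtain ⟨v, hv, hval⟩ := exists_mem_golayCode_eqOn (T := {21, 22, 23}) (by decide)
      (fun i => if i = 21 then a else if i = 22 then b else 0)
    refine ⟨v, hv, ?_⟩
    simp [defect, coord, hval]
  have hrank := finrank_map_add_finrank_inf_ker GolayCode defect
  rw [← heq, hmap, finrank_top, finrank_prod, finrank_self, finrank_golayCode] at hrank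
  omega

theorem finrank_C21 : finrank (ZMod 2) C21 = 10 := by
  set restrict : (Fin 24 → ZMod 2) →ₗ[ZMod 2] (Fin 21 → ZMod 2) :=
    LinearMap.funLeft (ZMod 2) (ZMod 2) (Fin.castLE (by omega))
  have hker : GolayEq ⊓ LinearMap.ker restrict = ⊥ := by
    refine (Submodule.eq_bot_iff _).2 fun v ⟨hv, hv_restrict⟩ => by_contra fun hv0 => ?_
    have hge := eight_le_hammingNorm_of_mem_golayCode (mem_golayEq.1 hv).1 hv0
    rw [hammingNorm_eq_add_ite_of_mem_golayEq hv,
      hammingNorm_eq_zero.2 (show v ∘ Fin.castLE _ = 0 from hv_restrict)] at hge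
    split_ifs at hge <;> omega
  have hrank := finrank_map_add_finrank_inf_ker GolayEq restrict
  rw [hker, finrank_bot, finrank_golayEq] at hrank
  exact hrank

theorem one_mem_C21 : 1 ∈ C21 :=
  ⟨1, mem_golayEq.2 ⟨one_mem_golayCode, rfl, rfl⟩, rfl⟩

theorem hammingNorm_mem_of_mem_C21 {w : Fin 21 → ZMod 2} (hw : w ∈ C21) :
    hammingNorm w ∈ ({0, 5, 8, 9, 12, 13, 16, 21} : Finset ℕ) := by
  obtain ⟨v, hv, rfl⟩ := mem_C21.1 hw
  have hmem := hammingNorm_mem_of_mem_golayCode (mem_golayEq.1 hv).1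
  have hle := hammingNorm_le_card_fintype (x := v ∘ Fin.castLE (by omega : 21 ≤ 24))
  rw [hammingNorm_eq_add_ite_of_mem_golayEq hv] at hmem
  rw [Fintype.card_fin] at hle
  simp only [mem_insert, mem_singleton] at hmem ⊢
  split_ifs at hmem <;> grind

theorem hammingNorm_mem_of_mem_evenSubcode_C21 {w : Fin 21 → ZMod 2} (hw : w ∈ evenSubcode C21) :
    hammingNorm w ∈ ({0, 8, 12, 16} : Finset ℕ) := by
  obtain ⟨hwC, heven⟩ := mem_evenSubcode.1 hw
  have hmem := hammingNorm_mem_of_mem_C21 hwC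
  simp only [mem_insert, mem_singleton] at hmem ⊢
  grind

theorem exists_mem_evenSubcode_C21_apply_eq_one_and_apply_eq_zero {i j : Fin 21} (hij : i ≠ j) :
    ∃ w ∈ evenSubcode C21, w i = 1 ∧ w j = 0 := by
  set inc : Fin 21 → Fin 24 := Fin.castLE (by omega)
  have hinc (k : Fin 21) : (inc k : ℕ) = k := rfl
  obtain ⟨v, hv, hval⟩ := exists_mem_golayCode_eqOn (T := {inc i, inc j, 21, 22, 23})
    (card_le_five.trans_lt (by norm_num)) (Pi.single (inc i) 1)
  have hv_tail : v 21 = 0 ∧ v 22 = 0 ∧ v 23 = 0 := by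
    grind
  have hvEq : v ∈ GolayEq :=
    mem_golayEq.2 ⟨hv, hv_tail.1.trans hv_tail.2.2.symm, hv_tail.2.1.trans hv_tail.2.2.symm⟩
  have hnorm : hammingNorm v = hammingNorm (v ∘ inc) := by
    rw [hammingNorm_eq_add_ite_of_mem_golayEq hvEq, if_pos hv_tail.2.2, add_zero]
  have heven : Even (hammingNorm (v ∘ inc)) := even_iff_two_dvd.2 <|
    (by norm_num : 2 ∣ 4).trans (hnorm ▸ four_dvd_hammingNorm_of_mem_golayCode hv)
  refine ⟨v ∘ inc, mem_evenSubcode.2 ⟨⟨v, hvEq, rfl⟩, heven⟩, ?_, ?_⟩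
  · exact (hval (inc i) (by simp)).trans (Pi.single_eq_same _ _)
  · exact (hval (inc j) (by simp)).trans
      (Pi.single_eq_of_ne ((Fin.castLE_injective _).ne hij.symm) _)

theorem exists_mem_evenSubcode_C21_apply_ne_zero (i : Fin 21) :
    ∃ w ∈ evenSubcode C21, w i ≠ 0 := by
  obtain ⟨j, hji⟩ := exists_ne i
  obtain ⟨w, hw, hwi, -⟩ := exists_mem_evenSubcode_C21_apply_eq_one_and_apply_eq_zero hji.symm
  exact ⟨w, hw, hwi.trans_ne one_ne_zero⟩

theorem exists_mem_evenSubcode_C21_apply_ne (i j : Fin 21) (hij : i ≠ j) :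
    ∃ w ∈ evenSubcode C21, w i ≠ w j := by
  obtain ⟨w, hw, hwi, hwj⟩ := exists_mem_evenSubcode_C21_apply_eq_one_and_apply_eq_zero hij
  exact ⟨w, hw, (hwi.trans_ne one_ne_zero).trans_eq hwj.symm⟩

theorem card_evenSubcode_C21 [Fintype (evenSubcode C21)] :
    Fintype.card (evenSubcode C21) = 512 := by
  have hrank := finrank_evenSubcode_add_one ⟨1, one_mem_C21, by decide⟩
  rw [finrank_C21] at hrank
  rw [card_eq_pow_finrank (K := ZMod 2), ZMod.card, Nat.succ_injective hrank]
  norm_num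

theorem weightCount_evenSubcode_C21 :
    weightCount (evenSubcode C21) 8 = 210 ∧ weightCount (evenSubcode C21) 12 = 280 ∧
      weightCount (evenSubcode C21) 16 = 21 := by
  have : Fintype (evenSubcode C21) := Fintype.ofFinite _
  have hsum (g : ℕ → ℕ) := sum_comp_hammingNorm
    (fun _ => hammingNorm_mem_of_mem_evenSubcode_C21) g
  have hmoment₀ := hsum fun _ => 1
  have hmoment₁ := two_mul_sum_hammingNorm exists_mem_evenSubcode_C21_apply_ne_zero
  have hmoment₂ := four_mul_sum_hammingNorm_sq exists_mem_evenSubcode_C21_apply_ne_zero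
    exists_mem_evenSubcode_C21_apply_ne
  rw [sum_const, card_univ, smul_eq_mul, mul_one, card_evenSubcode_C21] at hmoment₀
  rw [hsum fun k => k, Fintype.card_fin, card_evenSubcode_C21] at hmoment₁
  rw [hsum fun k => k ^ 2, Fintype.card_fin, card_evenSubcode_C21] at hmoment₂
  have hne : 0 ∉ ({8, 12, 16} : Finset ℕ) ∧ 8 ∉ ({12, 16} : Finset ℕ) ∧ 12 ∉ ({16} : Finset ℕ) := by
    decide
  simp only [sum_insert hne.1, sum_insert hne.2.1, sum_insert hne.2.2, sum_singleton,
    weightCount_zero] at hmoment₀ hmoment₁ hmoment₂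
  omega

end ShortenedGolay

/-- `C₂₁` is a `[21,10]` binary code with weight distribution
`0¹ 5²¹ 8²¹⁰ 9²⁸⁰ 12²⁸⁰ 13²¹⁰ 16²¹ 21¹`. -/
theorem C21_dim_and_weights :
    Module.finrank (ZMod 2) ↥C21 = 10 ∧
    (∀ w ∈ C21, wt21 w ∈ ({0, 5, 8, 9, 12, 13, 16, 21} : Set ℕ)) ∧
    Nat.card {w : ↥C21 // wt21 w.val = 0} = 1 ∧
    Nat.card {w : ↥C21 // wt21 w.val = 5} = 21 ∧
    Nat.card {w : ↥C21 // wt21 w.val = 8} = 210 ∧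
    Nat.card {w : ↥C21 // wt21 w.val = 9} = 280 ∧
    Nat.card {w : ↥C21 // wt21 w.val = 12} = 280 ∧
    Nat.card {w : ↥C21 // wt21 w.val = 13} = 210 ∧
    Nat.card {w : ↥C21 // wt21 w.val = 16} = 21 ∧
    Nat.card {w : ↥C21 // wt21 w.val = 21} = 1 := by
  obtain ⟨h8, h12, h16⟩ := weightCount_evenSubcode_C21
  rw [weightCount_evenSubcode (by decide)] at h8 h12 h16
  have h0 : weightCount C21 0 = 1 := weightCount_zero
  have hcompl {k l : ℕ} (hkl : k + l = 21) : weightCount C21 k = weightCount C21 l :=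
    weightCount_eq_of_add_eq_card one_mem_C21 hkl
  simp only [wt21_eq_hammingNorm]
  refine ⟨finrank_C21, fun w hw => ?_, h0, (hcompl rfl).trans h16, h8, (hcompl rfl).trans h12,
    h12, (hcompl rfl).trans h8, h16, (hcompl rfl).trans h0⟩
  simpa using hammingNorm_mem_of_mem_C21 hw
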